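/- Bound on the approximation bias b₂: under assumption G3(1), if g′ exists and is uniformly bounded (G5) and K ∈ L¹, then for every h > 0 and Δ > 0, |E[ĝ_h(x₀)] − K_h ⋆ g(x₀)| ≤ 2 ‖g′‖_∞ ‖K‖₁ ‖g‖₁ Δ. -/

import Mathlib

open MeasureTheory Real Filter Finset Asymptotics
open scoped Topology

noncomputable section

namespace LevyAdapt

/-- Fourier transform `g*(u) = ∫ e^{iux} g(x) dx`. -/
def ft (g : ℝ → ℝ) (u : ℝ) : ℂ :=
  ∫ x : ℝ, Complex.exp (Complex.I * u * x) * (g x : ℂ)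

/-- Scaled kernel `K_h(x) = h⁻¹ K(x/h)`. -/
def sk (K : ℝ → ℝ) (h x : ℝ) : ℝ := h⁻¹ * K (x / h)

/-- L¹ norm. -/
def nl1 (f : ℝ → ℝ) : ℝ := ∫ x : ℝ, |f x|

/-- Squared L² norm. -/
def nl2sq (f : ℝ → ℝ) : ℝ := ∫ x : ℝ, (f x) ^ 2

/-- Sup norm. -/
def nsup (f : ℝ → ℝ) : ℝ := ⨆ x : ℝ, |f x|

/-- L¹ norm of a complex-valued function on ℝ. -/
def cnl1 (f : ℝ → ℂ) : ℝ := ∫ u : ℝ, ‖f u‖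

/-- Squared L² norm of a complex-valued function on ℝ. -/
def cnl2sq (f : ℝ → ℂ) : ℝ := ∫ u : ℝ, ‖f u‖ ^ 2

/-- The largest integer strictly smaller than `β` (for `β > 0`). -/
def hfloor (β : ℝ) : ℕ := ⌈β⌉₊ - 1

/-- The Hölder class `H(β, L)`: with `l = hfloor β`, the `l`-th derivative exists and is
`(β - l)`-Hölder with constant `L`. -/
def Holder (β L : ℝ) (f : ℝ → ℝ) : Prop :=
  (∀ m : ℕ, m < hfloor β → Differentiable ℝ (iteratedDeriv m f)) ∧
  ∀ x y : ℝ,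
    |iteratedDeriv (hfloor β) f x - iteratedDeriv (hfloor β) f y| ≤
      L * |x - y| ^ (β - (hfloor β : ℝ))

/-- Assumption G1: `g ∈ L²`. -/
def G1 (g : ℝ → ℝ) : Prop := Integrable (fun x : ℝ => (g x) ^ 2)

/-- Assumption G2: `g*` is differentiable a.e. and its derivative is integrable. -/
def G2 (g : ℝ → ℝ) : Prop :=
  (∀ᵐ u : ℝ, DifferentiableAt ℝ (ft g) u) ∧ Integrable (deriv (ft g))

/-- Assumption G3(p): `∫ |x|^(p-1) |g(x)| dx < ∞`. -/
def G3 (p : ℕ) (g : ℝ → ℝ) : Prop :=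
  Integrable (fun x : ℝ => |x| ^ (p - 1) * |g x|)

/-- Assumption G5: `g'` exists and is uniformly bounded. -/
def G5 (g : ℝ → ℝ) : Prop :=
  Differentiable ℝ g ∧ BddAbove (Set.range fun x : ℝ => |deriv g x|)

/-- Assumption K1: `K ∈ L¹ ∩ L² ∩ L^∞` and `K* ∈ L¹`. -/
def K1 (K : ℝ → ℝ) : Prop :=
  Measurable K ∧ Integrable K ∧ Integrable (fun x : ℝ => (K x) ^ 2) ∧
    BddAbove (Set.range fun x : ℝ => |K x|) ∧ Integrable (ft K)

/-- `K` is a kernel of order `m`. -/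
def KernelOrder (m : ℕ) (K : ℝ → ℝ) : Prop :=
  (∀ j : ℕ, j ≤ m → Integrable (fun t : ℝ => t ^ j * K t)) ∧
  (∫ t : ℝ, K t) = 1 ∧
  ∀ j : ℕ, 1 ≤ j → j ≤ m → (∫ t : ℝ, t ^ j * K t) = 0

/-- Assumption K2(α): `K` is a kernel of order `hfloor α` and `∫ |x|^α |K(x)| dx < ∞`. -/
def K2 (α : ℝ) (K : ℝ → ℝ) : Prop :=
  KernelOrder (hfloor α) K ∧ Integrable (fun x : ℝ => |x| ^ α * |K x|)

/-- `P` is the law of an increment of length `Δ` of the pure-jump Lévy process with Lévy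
density `N`, characterized through its characteristic function. -/
def IncrementLawN (P : Measure ℝ) (Δ : ℝ) (N : ℝ → ℝ) : Prop :=
  ∀ u : ℝ,
    (∫ x : ℝ, Complex.exp (Complex.I * u * x) ∂P) =
      Complex.exp ((Δ : ℂ) * ∫ x : ℝ, (Complex.exp (Complex.I * u * x) - 1) * (N x : ℂ))

/-- Increment law expressed through `g(x) = x N(x)`, i.e. `N(x) = g(x)/x`. -/
def IncrementLaw (P : Measure ℝ) (Δ : ℝ) (g : ℝ → ℝ) : Prop :=
  IncrementLawN P Δ fun x => g x / x

/-- The `n`-sample (i.i.d.) product measure. -/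
def pm (P : Measure ℝ) [SigmaFinite P] (n : ℕ) : Measure (Fin n → ℝ) :=
  Measure.pi fun _ => P

/-- The kernel estimator `ĝ_h(x) = (nΔ)⁻¹ ∑ₖ Zₖ K_h(x - Zₖ)`. -/
def ghat (K : ℝ → ℝ) (h Δ : ℝ) {n : ℕ} (z : Fin n → ℝ) (x : ℝ) : ℝ :=
  ((n : ℝ) * Δ)⁻¹ * ∑ k : Fin n, z k * sk K h (x - z k)

/-- The auxiliary estimator `ĝ_{h,h'}(x)` using the convolved kernel `K_{h'} ⋆ K_h`. -/
def ghat2 (K : ℝ → ℝ) (h h' Δ : ℝ) {n : ℕ} (z : Fin n → ℝ) (x : ℝ) : ℝ :=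
  ((n : ℝ) * Δ)⁻¹ *
    ∑ k : Fin n, z k * ∫ y : ℝ, sk K h' y * sk K h (x - z k - y)

/-- Mean `E[ĝ_h(x)]` of the kernel estimator. -/
def mghat (K : ℝ → ℝ) (h Δ : ℝ) (n : ℕ) (P : Measure ℝ) [SigmaFinite P] (x : ℝ) : ℝ :=
  ∫ z : Fin n → ℝ, ghat K h Δ z x ∂(pm P n)

/-- Mean `E[ĝ_{h,h'}(x)]` of the auxiliary estimator. -/
def mghat2 (K : ℝ → ℝ) (h h' Δ : ℝ) (n : ℕ) (P : Measure ℝ) [SigmaFinite P] (x : ℝ) : ℝ :=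
  ∫ z : Fin n → ℝ, ghat2 K h h' Δ z x ∂(pm P n)

/-- The pointwise mean squared error `E[(ĝ_h(x) - g(x))²]`. -/
def mse (K : ℝ → ℝ) (h Δ : ℝ) (n : ℕ) (P : Measure ℝ) [SigmaFinite P]
    (g : ℝ → ℝ) (x : ℝ) : ℝ :=
  ∫ z : Fin n → ℝ, (ghat K h Δ z x - g x) ^ 2 ∂(pm P n)

/-- The variance `Var[ĝ_h(x)]`. -/
def varghat (K : ℝ → ℝ) (h Δ : ℝ) (n : ℕ) (P : Measure ℝ) [SigmaFinite P] (x : ℝ) : ℝ :=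
  ∫ z : Fin n → ℝ, (ghat K h Δ z x - mghat K h Δ n P x) ^ 2 ∂(pm P n)

/-- The constant `c₁ = 2 (L/⌊β⌋! ∫|K(v)||v|^β dv)²`. -/
def c1 (K : ℝ → ℝ) (β L : ℝ) : ℝ :=
  2 * (L / (Nat.factorial (hfloor β) : ℝ) * ∫ v : ℝ, |K v| * |v| ^ β) ^ 2

/-- The constant `c₁' = 2 (2‖g'‖_∞ ‖g‖₁ ‖K‖₁)²`. -/
def c1' (K g : ℝ → ℝ) : ℝ := 2 * (2 * nsup (deriv g) * nl1 g * nl1 K) ^ 2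

/-- The constant `c₂ = ‖(g*)'‖₁ ‖K‖₂² / (2π)`. -/
def c2 (K g : ℝ → ℝ) : ℝ := cnl1 (deriv (ft g)) * nl2sq K / (2 * π)

/-- The constant `c₂' = ‖K‖₂² ‖g‖₂²`. -/
def c2' (K g : ℝ → ℝ) : ℝ := nl2sq K * nl2sq g

/-- The constant `C₀ = (c/(2π)) ‖K‖₂² (‖(g*)'‖₁ + ‖g*‖₂²)`. -/
def C0 (c : ℝ) (K g : ℝ → ℝ) : ℝ :=
  c / (2 * π) * nl2sq K * (cnl1 (deriv (ft g)) + cnl2sq (ft g))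

/-- The penalty `V(h) = C₀ log(nΔ) / (nhΔ)`. -/
def Vfun (c : ℝ) (K g : ℝ → ℝ) (n : ℕ) (Δ h : ℝ) : ℝ :=
  C0 c K g * Real.log ((n : ℝ) * Δ) / ((n : ℝ) * h * Δ)

/-- The bandwidth collection `H = {j/M : 1 ≤ j ≤ M}`. -/
def bset (M : ℕ) : Finset ℝ := (Finset.Icc 1 M).image fun j : ℕ => (j : ℝ) / (M : ℝ)

/-- The quantity `A(h, x₀) = sup_{h' ∈ H} [ |ĝ_{h,h'}(x₀) - ĝ_{h'}(x₀)|² - V(h') ]₊`. -/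
def Afun (K : ℝ → ℝ) (Δ : ℝ) (H : Finset ℝ) (V : ℝ → ℝ) {n : ℕ}
    (z : Fin n → ℝ) (x h : ℝ) : ℝ :=
  ⨆ h' ∈ H, max ((ghat2 K h h' Δ z x - ghat K h' Δ z x) ^ 2 - V h') 0

/-- Average `Δ̄` of the sampling intervals. -/
def dbar {n : ℕ} (Δs : Fin n → ℝ) : ℝ := (n : ℝ)⁻¹ * ∑ k, Δs k

/-- Average `Δ²‾` of the squared sampling intervals. -/
def d2bar {n : ℕ} (Δs : Fin n → ℝ) : ℝ := (n : ℝ)⁻¹ * ∑ k, (Δs k) ^ 2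

/-- The truncation level `μ_n(h)`. -/
def mulev (c : ℝ) (K g : ℝ → ℝ) (n : ℕ) (Δ h : ℝ) : ℝ :=
  nl2sq K * (cnl1 (deriv (ft g)) + cnl2sq (ft g)) /
    (2 * π * nsup K * Real.sqrt (Vfun c K g n Δ h / 6))

/-- The truncated summand `W(h)` as a function of a single observation. -/
def Wtr (c : ℝ) (K g : ℝ → ℝ) (n : ℕ) (Δ h x₀ x : ℝ) : ℝ :=
  if |x| ≤ mulev c K g n Δ h then x / Δ * sk K h (x₀ - x) else 0

/-- The remainder summand `T(h)` as a function of a single observation. -/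
def Ttr (c : ℝ) (K g : ℝ → ℝ) (n : ℕ) (Δ h x₀ x : ℝ) : ℝ :=
  if mulev c K g n Δ h < |x| then x / Δ * sk K h (x₀ - x) else 0

/-- The empirical estimator of `‖(g*)'‖₁`. -/
def estDeriv (Δ : ℝ) {n : ℕ} (z : Fin n → ℝ) (hband : ℝ) : ℝ :=
  ∫ u : ℝ, ‖(((n : ℝ) * Δ)⁻¹ : ℂ) *
      ∑ k : Fin n, (z k : ℂ) ^ 2 *
        (Set.indicator (Set.Icc (-1 : ℝ) 1) (fun _ => (1 : ℂ)) (u * hband)) *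
        Complex.exp (Complex.I * u * z k)‖

/-- The empirical estimator of `‖g*‖₂²`. -/
def estL2 (Δ : ℝ) {n : ℕ} (z : Fin n → ℝ) (hband : ℝ) : ℝ :=
  ∫ u : ℝ, ‖(((n : ℝ) * Δ)⁻¹ : ℂ) *
      ∑ k : Fin n, (z k : ℂ) *
        (Set.indicator (Set.Icc (-1 : ℝ) 1) (fun _ => (1 : ℂ)) (u * hband)) *
        Complex.exp (Complex.I * u * z k)‖ ^ 2

/-- The data-driven penalty `V(h)` built with the estimated constant `C₀`. -/
def VfunHat (c : ℝ) (K : ℝ → ℝ) (n : ℕ) (Δ : ℝ) {m : ℕ} (z : Fin m → ℝ) (h : ℝ) : ℝ :=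
  c / (2 * π) * nl2sq K *
      (estDeriv Δ z (((n : ℝ) * Δ) ^ (-(1/3 : ℝ))) + estL2 Δ z (((n : ℝ) * Δ) ^ (-(1/3 : ℝ)))) *
    Real.log ((n : ℝ) * Δ) / ((n : ℝ) * h * Δ)

section

open ProbabilityTheory

lemma norm_exp_I_mul_mul (u x : ℝ) : ‖Complex.exp (Complex.I * u * x)‖ = 1 := by
  have h : Complex.I * u * x = ((u * x : ℝ) : ℂ) * Complex.I := by push_cast; ring
  rw [h, Complex.norm_exp_ofReal_mul_I]

/-- Gaussian integration by parts (Stein's identity) for bounded `C¹` functions. -/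
lemma integral_mul_gaussianReal_eq_integral_deriv {F F' : ℝ → ℂ} {C C' : ℝ}
    (hF : ∀ x, HasDerivAt F (F' x) x) (hF'm : Continuous F')
    (hC : ∀ x, ‖F x‖ ≤ C) (hC' : ∀ x, ‖F' x‖ ≤ C') :
    ∫ v : ℝ, (v : ℂ) * F v ∂gaussianReal 0 1 = ∫ v, F' v ∂gaussianReal 0 1 := by
  have hFc : Continuous F := continuous_iff_continuousAt.2 fun x => (hF x).continuousAt
  rw [integral_gaussianReal_eq_integral_smul one_ne_zero,
    integral_gaussianReal_eq_integral_smul one_ne_zero]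
  set p : ℝ → ℝ := gaussianPDFReal 0 1 with hp
  have hpd : ∀ x, HasDerivAt p (-(x * p x)) x := by
    intro x
    have h1 : HasDerivAt (fun y : ℝ => -(y - 0) ^ 2 / (2 * ((1 : NNReal) : ℝ))) (-x) x := by
      have := (((hasDerivAt_id x).sub_const 0).pow 2).neg.div_const (2 * ((1 : NNReal) : ℝ))
      refine this.congr_deriv ?_
      simp
      ring
    have h2 := (h1.exp).const_mul (√(2 * π * ((1 : NNReal) : ℝ)))⁻¹
    rw [hp, gaussianPDFReal_def]
    refine h2.congr_deriv ?_
    ring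
  have hpi : Integrable p := integrable_gaussianPDFReal 0 1
  have hxpi : Integrable fun x : ℝ => x * p x := by
    have h := (integrable_mul_exp_neg_mul_sq (b := 1 / 2) (by norm_num)).const_mul
      (√(2 * π * ((1 : NNReal) : ℝ)))⁻¹
    refine h.congr (Eventually.of_forall fun x => ?_)
    simp only [hp, gaussianPDFReal_def]
    have : -(x - 0) ^ 2 / (2 * ((1 : NNReal) : ℝ)) = -(1 / 2) * x ^ 2 := by simp; ring
    rw [this]
    ring
  have key := integral_mul_deriv_eq_deriv_mul_of_integrable
    (u := fun x => (p x : ℂ)) (u' := fun x => ((-(x * p x) : ℝ) : ℂ)) (v := F) (v' := F')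
    (fun x _ => (hpd x).ofReal_comp) (fun x _ => hF x)
    (hpi.ofReal.mul_bdd hF'm.aestronglyMeasurable (Eventually.of_forall hC'))
    (hxpi.neg.ofReal.mul_bdd hFc.aestronglyMeasurable (Eventually.of_forall hC))
    (hpi.ofReal.mul_bdd hFc.aestronglyMeasurable (Eventually.of_forall hC))
  simp only [Complex.real_smul]
  rw [key, ← integral_neg]
  refine integral_congr_ae (Eventually.of_forall fun x => ?_)
  simp
  ring

lemma continuous_ft {g : ℝ → ℝ} (hg : Integrable g) : Continuous (ft g) := by
  refine continuous_of_dominated (bound := fun x => ‖g x‖)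
    (fun u => ?_) (fun u => Eventually.of_forall fun x => ?_) hg.norm
    (Eventually.of_forall fun x => by fun_prop)
  · exact (Continuous.aestronglyMeasurable (by fun_prop)).mul hg.ofReal.1
  · rw [norm_mul, norm_exp_I_mul_mul, one_mul, Complex.norm_real]

lemma norm_ft_le (g : ℝ → ℝ) (u : ℝ) : ‖ft g u‖ ≤ nl1 g := by
  refine (norm_integral_le_integral_norm _).trans (le_of_eq ?_)
  simp [nl1, norm_exp_I_mul_mul]

lemma hasDerivAt_exp_I_mul (u x : ℝ) :
    HasDerivAt (fun s : ℝ => Complex.exp (Complex.I * s * x))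
      (Complex.I * x * Complex.exp (Complex.I * u * x)) u := by
  have h := (((Complex.ofRealCLM.hasDerivAt (x := u)).const_mul Complex.I).mul_const (x : ℂ)).cexp
  refine h.congr_deriv ?_
  simp only [Complex.ofRealCLM_apply, Complex.ofReal_one]
  ring

lemma hasDerivAt_levyExponent {g : ℝ → ℝ} (hg : Integrable g) (u : ℝ) :
    HasDerivAt
      (fun s : ℝ => ∫ x : ℝ, (Complex.exp (Complex.I * s * x) - 1) * ((g x / x : ℝ) : ℂ))
      (Complex.I * ft g u) u := by
  have hbd : ∀ s x : ℝ, ‖(Complex.exp (Complex.I * s * x) - 1) * ((g x / x : ℝ) : ℂ)‖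
      ≤ |s| * ‖g x‖ := by
    intro s x
    rcases eq_or_ne x 0 with rfl | hx
    · simp only [div_zero, Complex.ofReal_zero, mul_zero, norm_zero]; positivity
    have h1 : ‖Complex.exp (Complex.I * s * x) - 1‖ ≤ |s| * |x| := by
      have := Real.norm_exp_I_mul_ofReal_sub_one_le (x := s * x)
      rw [norm_mul, Real.norm_eq_abs, Real.norm_eq_abs] at this
      convert this using 4
      push_cast
      ring
    rw [norm_mul, Complex.norm_real, norm_div, Real.norm_eq_abs x]
    calc _ ≤ |s| * |x| * (‖g x‖ / |x|) := by gcongr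
      _ = |s| * ‖g x‖ := by field_simp
  have hmeas : ∀ s : ℝ, AEStronglyMeasurable
      (fun x : ℝ => (Complex.exp (Complex.I * s * x) - 1) * ((g x / x : ℝ) : ℂ)) := by
    intro s
    refine (Continuous.aestronglyMeasurable (by fun_prop)).mul ?_
    exact (Complex.continuous_ofReal.comp_aestronglyMeasurable
      (hg.1.aemeasurable.div aemeasurable_id).aestronglyMeasurable)
  have h := (hasDerivAt_integral_of_dominated_loc_of_deriv_le (x₀ := u) (μ := volume)
    (F := fun (s : ℝ) (x : ℝ) => (Complex.exp (Complex.I * s * x) - 1) * ((g x / x : ℝ) : ℂ))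
    (F' := fun (s : ℝ) (x : ℝ) => Complex.I * (Complex.exp (Complex.I * s * x) * (g x : ℂ)))
    (bound := fun x => ‖g x‖) (s := Set.univ) univ_mem (Eventually.of_forall hmeas)
    ((hg.norm.const_mul |u|).mono' (hmeas u) (Eventually.of_forall (hbd u)))
    (((Continuous.aestronglyMeasurable (by fun_prop)).mul hg.ofReal.1).const_mul _)
    (Eventually.of_forall fun x s _ => by simp [norm_exp_I_mul_mul])
    hg.norm ?_).2
  · rwa [integral_const_mul] at h
  · filter_upwards [compl_mem_ae_iff.2 (measure_singleton (0 : ℝ))] with x hx s _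
    have hx' : (x : ℂ) ≠ 0 := by exact_mod_cast hx
    refine (((hasDerivAt_exp_I_mul s x).sub_const 1).mul_const ((g x / x : ℝ) : ℂ)).congr_deriv ?_
    rw [Complex.ofReal_div]
    field_simp

lemma IncrementLaw.hasDerivAt {g : ℝ → ℝ} (hg : Integrable g) {P : Measure ℝ} {Δ : ℝ}
    (hP : IncrementLaw P Δ g) (u : ℝ) :
    HasDerivAt (fun s : ℝ => ∫ x : ℝ, Complex.exp (Complex.I * s * x) ∂P)
      (Complex.I * Δ * (ft g u * ∫ x : ℝ, Complex.exp (Complex.I * u * x) ∂P)) u := by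
  have h := ((hasDerivAt_levyExponent hg u).const_mul (Δ : ℂ)).cexp
  have hP' : (fun s : ℝ => ∫ x : ℝ, Complex.exp (Complex.I * s * x) ∂P) = _ := funext hP
  rw [← hP u] at h
  rw [hP']
  refine h.congr_deriv ?_
  ring

/-- The convolution `z ↦ ∫ g(z - y) P(dy)` of a function with a measure. -/
def mconv (g : ℝ → ℝ) (P : Measure ℝ) (z : ℝ) : ℝ := ∫ y : ℝ, g (z - y) ∂P

lemma integrable_sub_prod {g : ℝ → ℝ} (hgc : Continuous g) (hg : Integrable g)
    (P : Measure ℝ) [IsProbabilityMeasure P] :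
    Integrable (fun p : ℝ × ℝ => g (p.1 - p.2)) (volume.prod P) := by
  rw [integrable_prod_iff' (Continuous.aestronglyMeasurable (by fun_prop))]
  refine ⟨Eventually.of_forall fun y => hg.comp_sub_right y, ?_⟩
  have h : ∀ y : ℝ, ∫ x, ‖g (x - y)‖ = ∫ x, ‖g x‖ := fun y =>
    integral_sub_right_eq_self (fun x => ‖g x‖) y
  simp only [h]
  exact integrable_const _

lemma integrable_mconv {g : ℝ → ℝ} (hgc : Continuous g) (hg : Integrable g)
    (P : Measure ℝ) [IsProbabilityMeasure P] : Integrable (mconv g P) :=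
  (integrable_sub_prod hgc hg P).integral_prod_left

lemma measurable_mconv {g : ℝ → ℝ} (hgc : Continuous g)
    (P : Measure ℝ) [IsProbabilityMeasure P] : Measurable (mconv g P) := by
  have h : StronglyMeasurable (fun p : ℝ × ℝ => g (p.1 - p.2)) :=
    Continuous.stronglyMeasurable (by fun_prop)
  exact h.integral_prod_right.measurable

lemma nl1_mconv_le {g : ℝ → ℝ} (hgc : Continuous g) (hg : Integrable g)
    (P : Measure ℝ) [IsProbabilityMeasure P] : nl1 (mconv g P) ≤ nl1 g := by
  have hi := (integrable_sub_prod hgc hg P).norm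
  calc nl1 (mconv g P) ≤ ∫ z : ℝ, ∫ y : ℝ, ‖g (z - y)‖ ∂P :=
        integral_mono (integrable_mconv hgc hg P).norm hi.integral_prod_left
          fun z => norm_integral_le_integral_norm (fun y => g (z - y))
    _ = ∫ y : ℝ, (∫ z : ℝ, ‖g (z - y)‖) ∂P := integral_integral_swap hi
    _ = ∫ y : ℝ, nl1 g ∂P := by
        refine integral_congr_ae (Eventually.of_forall fun y => ?_)
        exact integral_sub_right_eq_self (fun x => ‖g x‖) y
    _ = nl1 g := by simp

lemma abs_mconv_le {g : ℝ → ℝ} {M : ℝ} (hM : ∀ x, |g x| ≤ M) (P : Measure ℝ)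
    [IsProbabilityMeasure P] (z : ℝ) : |mconv g P z| ≤ M := by
  have h : ∀ y, ‖g (z - y)‖ ≤ M := fun y => hM (z - y)
  simpa [mconv] using norm_integral_le_of_norm_le_const (μ := P) (Eventually.of_forall h)

lemma ft_mul_charFun {g : ℝ → ℝ} (hgc : Continuous g) (hg : Integrable g)
    (P : Measure ℝ) [IsProbabilityMeasure P] (s : ℝ) :
    ft g s * ∫ y : ℝ, Complex.exp (Complex.I * s * y) ∂P = ft (mconv g P) s := by
  have hi : Integrable (fun p : ℝ × ℝ => Complex.exp (Complex.I * s * p.1) *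
      (g (p.1 - p.2) : ℂ)) (volume.prod P) :=
    (integrable_sub_prod hgc hg P).ofReal.bdd_mul (c := 1)
      (Continuous.aestronglyMeasurable (by fun_prop))
      (Eventually.of_forall fun p => (norm_exp_I_mul_mul _ _).le)
  have h2 : ∀ y : ℝ, ∫ z : ℝ, Complex.exp (Complex.I * s * z) * (g (z - y) : ℂ) =
      ft g s * Complex.exp (Complex.I * s * y) := by
    intro y
    rw [← integral_add_right_eq_self _ y, ft, ← integral_mul_const]
    refine integral_congr_ae (Eventually.of_forall fun z => ?_)
    simp only [add_sub_cancel_right, Complex.ofReal_add, mul_add, Complex.exp_add]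
    ring
  calc _ = ∫ y : ℝ, (∫ z : ℝ, Complex.exp (Complex.I * s * z) * (g (z - y) : ℂ)) ∂P := by
        simp only [h2, integral_const_mul]
    _ = ∫ z : ℝ, ∫ y : ℝ, Complex.exp (Complex.I * s * z) * (g (z - y) : ℂ) ∂P :=
        (integral_integral_swap hi).symm
    _ = _ := by
        simp only [integral_const_mul, integral_complex_ofReal]
        rfl

lemma integral_exp_I_mul_gaussianReal (u z : ℝ) :
    ∫ v : ℝ, Complex.exp (Complex.I * ((u + v : ℝ) : ℂ) * z) ∂gaussianReal 0 1 =
      Complex.exp (Complex.I * u * z) * (Real.exp (-z ^ 2 / 2) : ℝ) := by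
  have h := charFun_gaussianReal (μ := 0) (v := 1) z
  rw [charFun_apply_real] at h
  have h2 : ∀ v : ℝ, Complex.exp (Complex.I * ((u + v : ℝ) : ℂ) * z) =
      Complex.exp (Complex.I * u * z) * Complex.exp (z * v * Complex.I) := by
    intro v
    rw [← Complex.exp_add]
    push_cast
    ring_nf
  simp only [h2, integral_const_mul, h]
  congr 1
  rw [Complex.ofReal_exp]
  congr 1
  simp [neg_div]

lemma integral_mul_exp_I_mul_gaussianReal (u z : ℝ) :
    ∫ v : ℝ, (v : ℂ) * Complex.exp (Complex.I * ((u + v : ℝ) : ℂ) * z) ∂gaussianReal 0 1 =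
      Complex.I * (Complex.exp (Complex.I * u * z) * ((Real.exp (-z ^ 2 / 2) * z : ℝ) : ℂ)) := by
  rw [integral_mul_gaussianReal_eq_integral_deriv (C := 1) (C' := |z|)
    (F' := fun v => Complex.I * z * Complex.exp (Complex.I * ((u + v : ℝ) : ℂ) * z))
    (fun v => (hasDerivAt_exp_I_mul (u + v) z).comp_const_add u v) (by fun_prop)
    (fun v => (norm_exp_I_mul_mul _ _).le)
    (fun v => by rw [norm_mul, norm_exp_I_mul_mul]; simp), integral_const_mul,
    integral_exp_I_mul_gaussianReal]
  push_cast
  ring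

/-- The measures `z P(dz)` and `Δ (g ⋆ P)(z) dz`, damped by a Gaussian weight, have the same
Fourier transform. -/
lemma IncrementLaw.integral_exp_mul {g : ℝ → ℝ} (hgc : Continuous g) (hg : Integrable g)
    {P : Measure ℝ} [IsProbabilityMeasure P] {Δ : ℝ} (hP : IncrementLaw P Δ g) (u : ℝ) :
    ∫ z : ℝ, Complex.exp (Complex.I * u * z) * ((Real.exp (-z ^ 2 / 2) * z : ℝ) : ℂ) ∂P =
      Δ * ∫ z : ℝ, Complex.exp (Complex.I * u * z) *
        ((Real.exp (-z ^ 2 / 2) * mconv g P z : ℝ) : ℂ) := by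
  have hk := integrable_mconv hgc hg P
  have hid : Integrable (fun v : ℝ => (v : ℂ)) (gaussianReal 0 1) :=
    ((memLp_id_gaussianReal (μ := 0) (v := 1) 1).integrable le_rfl).ofReal
  have hi1 : Integrable (fun p : ℝ × ℝ => (p.2 : ℂ) *
      Complex.exp (Complex.I * ((u + p.2 : ℝ) : ℂ) * p.1)) (P.prod (gaussianReal 0 1)) :=
    (hid.comp_snd P).mul_bdd (c := 1)
      (Continuous.aestronglyMeasurable (by fun_prop))
      (Eventually.of_forall fun p => (norm_exp_I_mul_mul _ _).le)
  have hi2 : Integrable (fun p : ℝ × ℝ => Complex.exp (Complex.I * ((u + p.1 : ℝ) : ℂ) * p.2) *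
      (mconv g P p.2 : ℂ)) ((gaussianReal 0 1).prod volume) :=
    ((hk.ofReal (𝕜 := ℂ)).comp_snd (gaussianReal 0 1)).bdd_mul (c := 1)
      (Continuous.aestronglyMeasurable (by fun_prop))
      (Eventually.of_forall fun p => (norm_exp_I_mul_mul _ _).le)
  have hstein := integral_mul_gaussianReal_eq_integral_deriv (C := 1) (C' := |Δ| * nl1 (mconv g P))
    (F := fun v : ℝ => ∫ z : ℝ, Complex.exp (Complex.I * ((u + v : ℝ) : ℂ) * z) ∂P)
    (F' := fun v : ℝ => Complex.I * Δ * ft (mconv g P) (u + v))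
    (fun v => by
      rw [← ft_mul_charFun hgc hg]
      exact (hP.hasDerivAt hg (u + v)).comp_const_add u v)
    (continuous_const.mul ((continuous_ft hk).comp (continuous_const_add u)))
    (fun v => (norm_integral_le_integral_norm _).trans (by
      simp only [norm_exp_I_mul_mul, integral_const, probReal_univ, smul_eq_mul, mul_one, le_refl]))
    (fun v => by
      rw [norm_mul, norm_mul, Complex.norm_I, one_mul, Complex.norm_real, Real.norm_eq_abs]
      gcongr
      exact norm_ft_le _ _)
  have hl : ∫ v : ℝ, (v : ℂ) * ∫ z : ℝ, Complex.exp (Complex.I * ((u + v : ℝ) : ℂ) * z) ∂P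
      ∂gaussianReal 0 1 = Complex.I * ∫ z : ℝ, Complex.exp (Complex.I * u * z) *
        ((Real.exp (-z ^ 2 / 2) * z : ℝ) : ℂ) ∂P := by
    simp only [← integral_const_mul, ← integral_mul_exp_I_mul_gaussianReal]
    exact (integral_integral_swap hi1).symm
  have hr : ∫ v : ℝ, ft (mconv g P) (u + v) ∂gaussianReal 0 1 =
      ∫ z : ℝ, Complex.exp (Complex.I * u * z) *
        ((Real.exp (-z ^ 2 / 2) * mconv g P z : ℝ) : ℂ) := by
    simp only [ft]
    rw [integral_integral_swap hi2]
    refine integral_congr_ae (Eventually.of_forall fun z => ?_)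
    simp only [integral_mul_const, integral_exp_I_mul_gaussianReal]
    push_cast
    ring
  rw [hl, integral_const_mul, hr, mul_assoc] at hstein
  exact mul_left_cancel₀ Complex.I_ne_zero hstein

lemma integral_withDensity_ofReal_sub {E : Type*} [NormedAddCommGroup E] [NormedSpace ℝ E]
    {μ : Measure ℝ} {f : ℝ → ℝ} {F : ℝ → E} (hf : Measurable f)
    (h₁ : Integrable F (μ.withDensity fun x => ENNReal.ofReal (f x)))
    (h₂ : Integrable F (μ.withDensity fun x => ENNReal.ofReal (-f x))) :
    Integrable (fun x => f x • F x) μ ∧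
      (∫ x, F x ∂(μ.withDensity fun x => ENNReal.ofReal (f x))) -
        ∫ x, F x ∂(μ.withDensity fun x => ENNReal.ofReal (-f x)) = ∫ x, f x • F x ∂μ := by
  have hm₁ : Measurable fun x => ENNReal.ofReal (f x) := by fun_prop
  have hm₂ : Measurable fun x => ENNReal.ofReal (-f x) := by fun_prop
  have ht₁ : ∀ᵐ x ∂μ, ENNReal.ofReal (f x) < ⊤ := Eventually.of_forall fun _ => ENNReal.ofReal_lt_top
  have ht₂ : ∀ᵐ x ∂μ, ENNReal.ofReal (-f x) < ⊤ :=
    Eventually.of_forall fun _ => ENNReal.ofReal_lt_top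
  have hi₁ := (integrable_withDensity_iff_integrable_smul' hm₁ ht₁).1 h₁
  have hi₂ := (integrable_withDensity_iff_integrable_smul' hm₂ ht₂).1 h₂
  have hsub : ∀ x, (ENNReal.ofReal (f x)).toReal • F x - (ENNReal.ofReal (-f x)).toReal • F x =
      f x • F x := by
    intro x
    rw [← sub_smul, ENNReal.toReal_ofReal', ENNReal.toReal_ofReal', max_zero_sub_max_neg_zero_eq_self]
  refine ⟨(hi₁.sub hi₂).congr (Eventually.of_forall hsub), ?_⟩
  rw [integral_withDensity_eq_integral_toReal_smul hm₁ ht₁,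
    integral_withDensity_eq_integral_toReal_smul hm₂ ht₂, ← integral_sub hi₁ hi₂]
  exact integral_congr_ae (Eventually.of_forall hsub)

lemma withDensity_ofReal_le {μ ν : Measure ℝ} {f g : ℝ → ℝ} (hf : Measurable f)
    (h : (μ.withDensity fun x => ENNReal.ofReal (f x)) +
        (ν.withDensity fun x => ENNReal.ofReal (-g x)) =
      (μ.withDensity fun x => ENNReal.ofReal (-f x)) +
        ν.withDensity fun x => ENNReal.ofReal (g x)) :
    (μ.withDensity fun x => ENNReal.ofReal (f x)) ≤
      ν.withDensity fun x => ENNReal.ofReal (g x) := by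
  have hS : MeasurableSet {x | 0 < f x} := measurableSet_lt measurable_const hf
  refine Measure.le_iff.2 fun s hs => ?_
  have h₁ : (μ.withDensity fun x => ENNReal.ofReal (f x)) (s \ {x | 0 < f x}) = 0 := by
    rw [withDensity_apply _ (hs.diff hS)]
    refine setLIntegral_eq_zero (hs.diff hS) fun x hx => ?_
    exact ENNReal.ofReal_of_nonpos (not_lt.1 hx.2)
  have h₂ : (μ.withDensity fun x => ENNReal.ofReal (-f x)) (s ∩ {x | 0 < f x}) = 0 := by
    rw [withDensity_apply _ (hs.inter hS)]
    refine setLIntegral_eq_zero (hs.inter hS) fun x hx => ?_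
    exact ENNReal.ofReal_of_nonpos (neg_nonpos.2 hx.2.le)
  have h₃ := DFunLike.congr_fun h (s ∩ {x | 0 < f x})
  rw [Measure.add_apply, Measure.add_apply, h₂, zero_add] at h₃
  rw [← measure_inter_add_sdiff s hS, h₁, add_zero]
  exact (le_self_add.trans h₃.le).trans (measure_mono Set.inter_subset_left)

lemma norm_exp_neg_sq_mul_le (z : ℝ) : ‖Real.exp (-z ^ 2 / 2) * z‖ ≤ 1 := by
  have h : |z| ≤ Real.exp (z ^ 2 / 2) := by
    have := Real.add_one_le_exp (z ^ 2 / 2)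
    nlinarith [sq_nonneg (|z| - 1), sq_abs z]
  rw [norm_mul, Real.norm_eq_abs, Real.norm_eq_abs, Real.abs_exp, neg_div, Real.exp_neg]
  exact inv_mul_le_one_of_le₀ h (Real.exp_pos _).le

/-- The identity `z P(dz) = Δ (g ⋆ P)(z) dz` of signed measures, with negative parts moved to the
other side. -/
lemma IncrementLaw.withDensity_add_eq {g : ℝ → ℝ} (hgc : Continuous g) (hg : Integrable g)
    {P : Measure ℝ} [IsProbabilityMeasure P] {Δ : ℝ} (hP : IncrementLaw P Δ g) :
    (P.withDensity fun z => ENNReal.ofReal z) +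
        (volume.withDensity fun z => ENNReal.ofReal (-(Δ * mconv g P z))) =
      (P.withDensity fun z => ENNReal.ofReal (-z)) +
        volume.withDensity fun z => ENNReal.ofReal (Δ * mconv g P z) := by
  have hkm := measurable_mconv hgc P
  have hk := integrable_mconv hgc hg P
  set w : ℝ → ℝ := fun z => Real.exp (-z ^ 2 / 2) with hw
  have hwm : Measurable w := by fun_prop
  have hw0 : ∀ z, 0 < w z := fun z => Real.exp_pos _
  have hw1 : ∀ z, ‖w z‖ ≤ 1 := by
    intro z
    rw [Real.norm_eq_abs, Real.abs_exp, Real.exp_le_one_iff]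
    nlinarith [sq_nonneg z]
  set f₁ : ℝ → ℝ := fun z => w z * z with hf₁
  set f₂ : ℝ → ℝ := fun z => Δ * (w z * mconv g P z) with hf₂
  have hm₁ : Measurable f₁ := by fun_prop
  have hm₂ : Measurable f₂ := by fun_prop
  have hi₁ : Integrable f₁ P := Integrable.of_bound hm₁.aestronglyMeasurable 1
    (Eventually.of_forall norm_exp_neg_sq_mul_le)
  have hi₂ : Integrable f₂ := (hk.bdd_mul hwm.aestronglyMeasurable
    (Eventually.of_forall hw1)).const_mul Δ
  have := isFiniteMeasure_withDensity_ofReal hi₁.2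
  have := isFiniteMeasure_withDensity_ofReal hi₁.neg.2
  have := isFiniteMeasure_withDensity_ofReal hi₂.2
  have := isFiniteMeasure_withDensity_ofReal hi₂.neg.2
  simp only [Pi.neg_apply] at *
  have hint : ∀ (μ : Measure ℝ) [IsFiniteMeasure μ] (u : ℝ),
      Integrable (fun z : ℝ => Complex.exp (u * z * Complex.I)) μ := by
    intro μ _ u
    refine Integrable.of_bound (Continuous.aestronglyMeasurable (by fun_prop)) 1
      (Eventually.of_forall fun z => ?_)
    rw [← Complex.ofReal_mul, Complex.norm_exp_ofReal_mul_I]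
  have hweighted : (P.withDensity fun z => ENNReal.ofReal (f₁ z)) +
        (volume.withDensity fun z => ENNReal.ofReal (-f₂ z)) =
      (P.withDensity fun z => ENNReal.ofReal (-f₁ z)) +
        volume.withDensity fun z => ENNReal.ofReal (f₂ z) := by
    refine Measure.ext_of_charFun (funext fun u => ?_)
    rw [charFun_apply_real, charFun_apply_real, integral_add_measure (hint _ u) (hint _ u),
      integral_add_measure (hint _ u) (hint _ u)]
    have e₁ := (integral_withDensity_ofReal_sub hm₁ (μ := P) (hint _ u) (hint _ u)).2
    have e₂ := (integral_withDensity_ofReal_sub hm₂ (μ := volume) (hint _ u) (hint _ u)).2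
    have e₃ : ∫ z : ℝ, f₁ z • Complex.exp (u * z * Complex.I) ∂P =
        ∫ z : ℝ, f₂ z • Complex.exp (u * z * Complex.I) := by
      have hexp : ∀ z : ℝ, Complex.exp (u * z * Complex.I) = Complex.exp (Complex.I * u * z) :=
        fun z => by ring_nf
      have h := hP.integral_exp_mul hgc hg u
      rw [← integral_const_mul] at h
      simp only [hexp, Complex.real_smul]
      calc _ = _ := integral_congr_ae (Eventually.of_forall fun z => mul_comm _ _)
        _ = _ := h
        _ = _ := integral_congr_ae (Eventually.of_forall fun z => by
          simp only [hf₂, hw]; push_cast; ring)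
    linear_combination e₁ - e₂ + e₃
  set W : ℝ → ENNReal := fun z => ENNReal.ofReal (w z) with hW
  have hWm : Measurable W := by fun_prop
  have hmul : ∀ (μ : Measure ℝ) (f f' : ℝ → ℝ), Measurable f → (∀ z, f' z = w z * f z) →
      μ.withDensity (fun z => ENNReal.ofReal (f' z)) =
        (μ.withDensity fun z => ENNReal.ofReal (f z)).withDensity W := by
    intro μ f f' hf hff'
    rw [← withDensity_mul _ (by fun_prop) hWm]
    congr 1
    ext z
    rw [hff', ENNReal.ofReal_mul (hw0 z).le, Pi.mul_apply, mul_comm]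
  rw [hmul P (fun z => z) f₁ (by fun_prop) (fun z => rfl),
    hmul P (fun z => -z) (fun z => -f₁ z) (by fun_prop) (fun z => by simp only [hf₁]; ring),
    hmul volume (fun z => Δ * mconv g P z) f₂ (by fun_prop) (fun z => by simp only [hf₂]; ring),
    hmul volume (fun z => -(Δ * mconv g P z)) (fun z => -f₂ z) (by fun_prop)
      (fun z => by simp only [hf₂]; ring),
    ← withDensity_add_measure, ← withDensity_add_measure] at hweighted
  have hinv : ∀ μ : Measure ℝ, (μ.withDensity W).withDensity W⁻¹ = μ := fun μ =>
    withDensity_inv_same hWm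
      (Eventually.of_forall fun z => (ENNReal.ofReal_pos.2 (hw0 z)).ne')
      (Eventually.of_forall fun z => ENNReal.ofReal_ne_top)
  rw [← hinv (_ + _), hweighted, hinv]

/-- The first moment of the increment law is at most `Δ ‖g‖₁`. -/
lemma IncrementLaw.integrable_id_and_integral_abs_le {g : ℝ → ℝ} (hgc : Continuous g)
    (hg : Integrable g) {P : Measure ℝ} [IsProbabilityMeasure P] {Δ : ℝ} (hΔ : 0 < Δ)
    (hP : IncrementLaw P Δ g) :
    Integrable (fun z => z) P ∧ ∫ z, |z| ∂P ≤ Δ * nl1 g := by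
  have hkm := measurable_mconv hgc P
  have hadd := hP.withDensity_add_eq hgc hg
  have h₁ := withDensity_ofReal_le measurable_id hadd Set.univ
  have h₂ := withDensity_ofReal_le (f := fun z => -z) (g := fun z => -(Δ * mconv g P z))
    measurable_neg (by simpa only [neg_neg] using hadd.symm) Set.univ
  simp only [withDensity_apply _ MeasurableSet.univ, Measure.restrict_univ, id] at h₁ h₂
  have habs : ∀ a : ℝ, ENNReal.ofReal |a| = ENNReal.ofReal a + ENNReal.ofReal (-a) := by
    intro a
    rcases le_total 0 a with ha | ha
    · rw [abs_of_nonneg ha, ENNReal.ofReal_of_nonpos (neg_nonpos.2 ha), add_zero]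
    · rw [abs_of_nonpos ha, ENNReal.ofReal_of_nonpos ha, zero_add]
  have hk : Integrable fun z => Δ * mconv g P z := (integrable_mconv hgc hg P).const_mul Δ
  have hle : ∫⁻ z, ENNReal.ofReal |z| ∂P ≤ ENNReal.ofReal (Δ * nl1 g) := by
    calc ∫⁻ z, ENNReal.ofReal |z| ∂P
        = (∫⁻ z, ENNReal.ofReal z ∂P) + ∫⁻ z, ENNReal.ofReal (-z) ∂P := by
          simp only [habs]; exact lintegral_add_left (by fun_prop) _
      _ ≤ (∫⁻ z, ENNReal.ofReal (Δ * mconv g P z)) + ∫⁻ z, ENNReal.ofReal (-(Δ * mconv g P z)) :=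
          add_le_add h₁ h₂
      _ = ∫⁻ z, ENNReal.ofReal |Δ * mconv g P z| := by
          simp only [habs]; exact (lintegral_add_left (by fun_prop) _).symm
      _ = ENNReal.ofReal (Δ * nl1 (mconv g P)) := by
          rw [← ofReal_integral_eq_lintegral_ofReal hk.abs
            (Eventually.of_forall fun _ => abs_nonneg _)]
          simp only [abs_mul, abs_of_pos hΔ, integral_const_mul, nl1]
      _ ≤ ENNReal.ofReal (Δ * nl1 g) := by
          gcongr
          exact nl1_mconv_le hgc hg P
  have hid : Integrable (fun z : ℝ => z) P := by
    refine ⟨aestronglyMeasurable_id, ?_⟩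
    rw [hasFiniteIntegral_iff_norm]
    exact hle.trans_lt ENNReal.ofReal_lt_top
  refine ⟨hid, ?_⟩
  have h0 : 0 ≤ nl1 g := integral_nonneg fun _ => abs_nonneg _
  rwa [← ofReal_integral_eq_lintegral_ofReal hid.abs (Eventually.of_forall fun _ => abs_nonneg _),
    ENNReal.ofReal_le_ofReal_iff (by positivity)] at hle

/-- `E[Z F(Z)] = Δ ∫ F (g ⋆ P)` for `F ∈ L¹`. -/
lemma IncrementLaw.integral_mul_eq {g : ℝ → ℝ} (hgc : Continuous g)
    (hg : Integrable g) {M : ℝ} (hM : ∀ x, |g x| ≤ M)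
    {P : Measure ℝ} [IsProbabilityMeasure P] {Δ : ℝ} (hΔ : 0 < Δ)
    (hP : IncrementLaw P Δ g) {F : ℝ → ℝ} (hF : Integrable F) :
    Integrable (fun z => z * F z) P ∧
      ∫ z, z * F z ∂P = Δ * ∫ z, mconv g P z * F z := by
  have hkm := measurable_mconv hgc P
  have hkM : ∀ z, |Δ * mconv g P z| ≤ Δ * M := by
    intro z
    rw [abs_mul, abs_of_pos hΔ]
    gcongr
    exact abs_mconv_le hM P z
  have hadd := hP.withDensity_add_eq hgc hg
  have hle₁ := withDensity_ofReal_le measurable_id hadd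
  have hle₂ := withDensity_ofReal_le (f := fun z => -z) (g := fun z => -(Δ * mconv g P z))
    measurable_neg (by simpa only [neg_neg] using hadd.symm)
  have hbd : ∀ f : ℝ → ℝ, (∀ z, f z ≤ Δ * M) →
      Integrable F (volume.withDensity fun z => ENNReal.ofReal (f z)) := by
    intro f hf
    have h : (volume.withDensity fun z => ENNReal.ofReal (f z)) ≤
        ENNReal.ofReal (Δ * M) • volume := by
      rw [← withDensity_const]
      exact withDensity_mono (Eventually.of_forall fun z => ENNReal.ofReal_le_ofReal (hf z))
    exact (hF.smul_measure ENNReal.ofReal_ne_top).mono_measure h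
  have hv₁ := hbd _ fun z => (le_abs_self _).trans (hkM z)
  have hv₂ := hbd _ fun z => (neg_le_abs _).trans (hkM z)
  have hp₁ := hv₁.mono_measure hle₁
  have hp₂ := hv₂.mono_measure hle₂
  obtain ⟨hI, e₁⟩ := integral_withDensity_ofReal_sub (μ := P) measurable_id hp₁ hp₂
  have e₂ := (integral_withDensity_ofReal_sub (by fun_prop) hv₁ hv₂).2
  have e₃ := congrArg (fun μ : Measure ℝ => ∫ z, F z ∂μ) hadd
  simp only [id, smul_eq_mul] at hI e₁ e₂
  simp only [id] at hp₁ hp₂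
  rw [integral_add_measure hp₁ hv₂, integral_add_measure hp₂ hv₁] at e₃
  refine ⟨hI, ?_⟩
  rw [← integral_const_mul]
  simp only [← mul_assoc]
  linarith

lemma integrable_sk_sub {K : ℝ → ℝ} (hK : Integrable K) {h : ℝ} (hh : 0 < h) (x₀ : ℝ) :
    Integrable fun z => sk K h (x₀ - z) :=
  ((hK.comp_div hh.ne').const_mul h⁻¹).comp_sub_left x₀

lemma nl1_sk_sub (K : ℝ → ℝ) {h : ℝ} (hh : 0 < h) (x₀ : ℝ) :
    nl1 (fun z => sk K h (x₀ - z)) = nl1 K := by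
  have h₁ := integral_sub_left_eq_self (fun z => |sk K h z|) volume x₀
  have h₂ := Measure.integral_comp_div (fun z => |K z|) h
  simp only [nl1]
  rw [h₁]
  simp only [sk, abs_mul, abs_inv, abs_of_pos hh, integral_const_mul]
  rw [h₂, abs_of_pos hh, smul_eq_mul, inv_mul_cancel_left₀ hh.ne']

lemma abs_le_of_lipschitz {g : ℝ → ℝ} (hg : Integrable g) {L : ℝ}
    (hL : ∀ x y, |g x - g y| ≤ L * |x - y|) (x : ℝ) : |g x| ≤ nl1 g + L := by
  have hL0 : 0 ≤ L := by simpa using (abs_nonneg _).trans (hL 1 0)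
  have hpt : ∀ t ∈ Set.Icc x (x + 1), |g x| - L ≤ |g t| := by
    intro t ht
    have h₁ : |x - t| ≤ 1 := abs_le.2 ⟨by linarith [ht.2], by linarith [ht.1]⟩
    have h₂ := abs_sub_abs_le_abs_sub (g x) (g t)
    nlinarith [hL x t]
  have h₁ : ∫ _ in Set.Icc x (x + 1), (|g x| - L) ≤ ∫ t in Set.Icc x (x + 1), |g t| :=
    setIntegral_mono_on (integrableOn_const (by simp)) hg.abs.integrableOn measurableSet_Icc hpt
  have h₂ : ∫ t in Set.Icc x (x + 1), |g t| ≤ nl1 g :=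
    setIntegral_le_integral hg.abs (Eventually.of_forall fun _ => abs_nonneg _)
  simp at h₁
  linarith

lemma G5.abs_sub_le {g : ℝ → ℝ} (hg : G5 g) (x y : ℝ) :
    |g x - g y| ≤ nsup (deriv g) * |x - y| :=
  Convex.norm_image_sub_le_of_norm_deriv_le (s := Set.univ) (fun z _ => hg.1 z)
    (fun z _ => le_ciSup hg.2 z) convex_univ (Set.mem_univ y) (Set.mem_univ x)

lemma mghat_eq {K : ℝ → ℝ} {h Δ x : ℝ} {n : ℕ} (hn : 1 ≤ n) (P : Measure ℝ)
    [IsProbabilityMeasure P] (hi : Integrable (fun z => z * sk K h (x - z)) P) :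
    mghat K h Δ n P x = Δ⁻¹ * ∫ z, z * sk K h (x - z) ∂P := by
  simp only [mghat, ghat, pm]
  rw [integral_const_mul, integral_finsetSum _ fun k _ =>
    integrable_comp_eval (μ := fun _ : Fin n => P) (i := k) hi]
  have h : ∀ k : Fin n, ∫ z : Fin n → ℝ, z k * sk K h (x - z k) ∂Measure.pi (fun _ => P) =
      ∫ z, z * sk K h (x - z) ∂P := fun k =>
    integral_comp_eval (μ := fun _ : Fin n => P) (i := k) hi.1
  have hn' : (n : ℝ) ≠ 0 := by positivity
  simp only [h, sum_const, card_univ, Fintype.card_fin, nsmul_eq_mul]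
  field_simp

end

/-- Bound on the approximation bias `b₂`. -/
theorem b2_bound (g K : ℝ → ℝ) (x₀ : ℝ) (hx₀ : x₀ ≠ 0)
    (hg1 : Integrable g) (hG5 : G5 g) (hKint : Integrable K)
    (h Δ : ℝ) (hh : 0 < h) (hΔ : 0 < Δ) (n : ℕ) (hn : 1 ≤ n)
    (P : Measure ℝ) [IsProbabilityMeasure P] (hP : IncrementLaw P Δ g) :
    |mghat K h Δ n P x₀ - ∫ u : ℝ, sk K h (x₀ - u) * g u| ≤
      2 * nsup (deriv g) * nl1 K * nl1 g * Δ := by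
  obtain ⟨L, hL⟩ : ∃ L, L = nsup (deriv g) := ⟨_, rfl⟩
  rw [← hL]
  have hlip : ∀ x y, |g x - g y| ≤ L * |x - y| := hL ▸ hG5.abs_sub_le
  have hL0 : 0 ≤ L := by simpa using (abs_nonneg _).trans (hlip 1 0)
  have hgc : Continuous g := hG5.1.continuous
  have hM := abs_le_of_lipschitz hg1 hlip
  have hF := integrable_sk_sub hKint hh x₀
  have hFn := nl1_sk_sub K hh x₀
  obtain ⟨hid, hmom⟩ := hP.integrable_id_and_integral_abs_le hgc hg1 hΔ
  obtain ⟨hI, hE⟩ := hP.integral_mul_eq hgc hg1 hM hΔ hF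
  have hshift : ∀ z, Integrable (fun y => g (z - y)) P := fun z =>
    Integrable.of_bound (Continuous.aestronglyMeasurable (by fun_prop)) (nl1 g + L)
      (Eventually.of_forall fun y => hM (z - y))
  have hdiff : ∀ z, |mconv g P z - g z| ≤ L * (Δ * nl1 g) := by
    intro z
    have h₁ : mconv g P z - g z = ∫ y, (g (z - y) - g z) ∂P := by
      rw [integral_sub (hshift z) (integrable_const _)]
      simp [mconv]
    rw [h₁, ← Real.norm_eq_abs]
    calc _ ≤ ∫ y, L * |y| ∂P :=
          norm_integral_le_of_norm_le (hid.abs.const_mul L)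
            (Eventually.of_forall fun y => by
              simpa only [sub_sub_cancel_left, abs_neg, Real.norm_eq_abs] using hlip (z - y) z)
      _ ≤ L * (Δ * nl1 g) := by
          rw [integral_const_mul]
          gcongr
  have hgF : Integrable fun z => sk K h (x₀ - z) * g z :=
    hF.mul_bdd hgc.aestronglyMeasurable (Eventually.of_forall hM)
  have hkF : Integrable fun z => mconv g P z * sk K h (x₀ - z) :=
    hF.bdd_mul (measurable_mconv hgc P).aestronglyMeasurable (Eventually.of_forall (abs_mconv_le hM P))
  rw [mghat_eq hn P hI, hE, inv_mul_cancel_left₀ hΔ.ne', ← integral_sub hkF hgF]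
  have hK0 : 0 ≤ nl1 K := integral_nonneg fun _ => abs_nonneg _
  have hg0 : 0 ≤ nl1 g := integral_nonneg fun _ => abs_nonneg _
  rw [← Real.norm_eq_abs]
  calc _ ≤ ∫ z, L * (Δ * nl1 g) * |sk K h (x₀ - z)| := by
        refine norm_integral_le_of_norm_le (hF.abs.const_mul _) (Eventually.of_forall fun z => ?_)
        have : mconv g P z * sk K h (x₀ - z) - sk K h (x₀ - z) * g z =
            (mconv g P z - g z) * sk K h (x₀ - z) := by ring
        rw [this, Real.norm_eq_abs, abs_mul]
        gcongr
        exact hdiff z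
    _ = L * nl1 K * nl1 g * Δ := by
        rw [integral_const_mul]
        simp only [nl1] at hFn ⊢
        rw [hFn]
        ring
    _ ≤ 2 * L * nl1 K * nl1 g * Δ := by
        have : 0 ≤ L * nl1 K * nl1 g * Δ := by positivity
        linarith

end LevyAdapt
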